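/- Let (T,f) be a Hubbard tree and let z₁ be the characteristic point of a periodic orbit of branch points, of exact period n. Then the first return map f^n either permutes all the local arms at z₁ transitively in a single cycle, or it fixes the local arm at z₁ pointing toward c₀ and permutes all the other local arms at z₁ transitively in a single cycle. -/

import Mathlib

/- Common definitions for formalizing "Admissibility of kneading sequences and
structure of Hubbard trees for quadratic polynomials" by Bruin–Schleicher. -/

namespace HubbardTrees

/-- The symbols `0`, `1`, `*` used for itineraries and kneading sequences. -/
inductive Sym : Type
  | zero : Sym
  | one : Sym
  | star : Sym
deriving DecidableEq

/-- `A` is an arc in `X` joining `x` and `y` (a point if `x = y`, otherwise a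
homeomorphic image of `[0,1]` with endpoints `x` and `y`). -/
def IsArcBetween {X : Type*} [TopologicalSpace X] (A : Set X) (x y : X) : Prop :=
  (x = y ∧ A = {x}) ∨
  (x ≠ y ∧ ∃ γ : Path x y, Topology.IsEmbedding ⇑γ ∧ Set.range ⇑γ = A)

/-- The global arms at `x`: the connected components of `X \ {x}`. -/
def arms {X : Type*} [TopologicalSpace X] (x : X) : Set (Set X) :=
  {C | ∃ y, y ≠ x ∧ C = connectedComponentIn {x}ᶜ y}

/-- The global arm at `x` containing `y` (for `y ≠ x`): the component of `X \ {x}`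
containing `y`.  Local arms at `x` being germs of global arms, we represent the local
arm at `x` pointing towards `y` by this set. -/
def armTo {X : Type*} [TopologicalSpace X] (x y : X) : Set X :=
  connectedComponentIn {x}ᶜ y

/-- `x` is an endpoint: it has exactly one arm. -/
def IsEndpoint {X : Type*} [TopologicalSpace X] (x : X) : Prop :=
  (arms x).ncard = 1

/-- `x` is a branch point: it has at least three arms. -/
def IsBranchPt {X : Type*} [TopologicalSpace X] (x : X) : Prop :=
  3 ≤ (arms x).ncard

/-- `f` maps the set `A` homeomorphically onto its image. -/
def MapsHomeoOn {X : Type*} [TopologicalSpace X] (f : X → X) (A : Set X) : Prop :=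
  Topology.IsEmbedding (A.restrict f)

/-- `f` is a local homeomorphism onto its image at `x`. -/
def IsLocalHomeoAt {X : Type*} [TopologicalSpace X] (f : X → X) (x : X) : Prop :=
  ∃ U : Set X, IsOpen U ∧ x ∈ U ∧ Topology.IsEmbedding (U.restrict f)

/-- `g` sends the local arm at `x` represented by the global arm `C` to the local
arm at `g x` represented by `C'` (germ condition: some initial piece of `C` at `x`
is mapped into `C'`). -/
def MapsLocalArm {X : Type*} [TopologicalSpace X] (g : X → X) (x : X) (C C' : Set X) : Prop :=
  C ∈ arms x ∧ C' ∈ arms (g x) ∧ ∃ U ∈ nhds x, g '' (C ∩ U) ⊆ C'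

/-- `z` is periodic under `f` with exact period `n`. -/
def ExactPeriod {Y : Type*} (f : Y → Y) (z : Y) (n : ℕ) : Prop :=
  1 ≤ n ∧ f^[n] z = z ∧ ∀ k, 1 ≤ k → k < n → f^[k] z ≠ z

/-- The first return map `f^[n]` of the fixed point `z` of `f^[n]` permutes all the
local arms at `z` transitively in a single cycle. -/
def ArmsTransitive {X : Type*} [TopologicalSpace X] (f : X → X) (n : ℕ) (z : X) : Prop :=
  ∀ C ∈ arms z, ∀ C' ∈ arms z, ∃ j : ℕ, MapsLocalArm (f^[n * j]) z C C'

/-- An (abstract) Hubbard tree: a finite topological tree `X` together with a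
continuous surjection `f` and a critical point `c0`, subject to the axioms of
Bruin–Schleicher. -/
structure HubbardTree (X : Type*) [TopologicalSpace X] : Type _ where
  /-- the dynamics -/
  f : X → X
  /-- the critical point -/
  c0 : X
  compact : CompactSpace X
  t2 : T2Space X
  conn : ConnectedSpace X
  /-- the unique arc `[x,y]` joining two points -/
  arc : X → X → Set X
  arc_isArc : ∀ x y : X, IsArcBetween (arc x y) x y
  arc_unique : ∀ (x y : X) (A : Set X), IsArcBetween A x y → A = arc x y
  -- finiteness of the tree
  arms_finite : ∀ x : X, (arms x).Finite
  branch_finite : Set.Finite {x : X | IsBranchPt x}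
  endpoint_finite : Set.Finite {x : X | IsEndpoint x}
  cont : Continuous f
  surj : Function.Surjective f
  /-- every point has at most two inverse images -/
  two_preimages : ∀ y : X, ∃ a b : X, f ⁻¹' {y} ⊆ {a, b}
  /-- local homeomorphism onto its image away from the critical point -/
  local_homeo : ∀ x : X, x ≠ c0 → IsLocalHomeoAt f x
  /-- all endpoints lie on the critical orbit -/
  endpoints_on_orbit : ∀ x : X, IsEndpoint x → ∃ k : ℕ, f^[k] c0 = x
  /-- the critical point is periodic or preperiodic -/
  crit_preperiodic : ∃ k n : ℕ, 1 ≤ n ∧ f^[k + n] c0 = f^[k] c0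
  /-- the critical point is not fixed -/
  crit_not_fixed : f c0 ≠ c0
  /-- expansivity -/
  expansive : ∀ x y : X, x ≠ y →
    (IsBranchPt x ∨ ∃ k : ℕ, f^[k] c0 = x) →
    (IsBranchPt y ∨ ∃ k : ℕ, f^[k] c0 = y) →
    ∃ n : ℕ, c0 ∈ f^[n] '' (arc x y)

namespace HubbardTree

variable {X : Type*} [TopologicalSpace X] (H : HubbardTree X)

/-- The critical value `c₁ = f(c₀)`. -/
def c1 : X := H.f H.c0

/-- The component `T₁` of `T \ {c₀}` containing the critical value. -/
def T1 : Set X := connectedComponentIn {H.c0}ᶜ H.c1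

open Classical in
/-- The symbol (`0`, `1` or `*`) attached to a point of the tree. -/
noncomputable def symOf (x : X) : Sym :=
  if x = H.c0 then Sym.star else if x ∈ H.T1 then Sym.one else Sym.zero

/-- The itinerary of `x`: a sequence of symbols, 1-indexed (the value at index `0`
is irrelevant); entry `k ≥ 1` is the symbol of `f^[k-1] x`. -/
noncomputable def itin (x : X) : ℕ → Sym :=
  fun k => H.symOf (H.f^[k - 1] x)

/-- The kneading sequence: the itinerary of the critical value (1-indexed). -/
noncomputable def kneading : ℕ → Sym := H.itin H.c1

/-- `z` is the characteristic point of its periodic orbit: `c₁` lies in one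
component of `X \ {z}` while `c₀` and all other points of the orbit lie in a
different component. -/
def IsCharacteristic (z : X) : Prop :=
  ∃ Cv Cz : Set X, Cv ∈ arms z ∧ Cz ∈ arms z ∧ Cv ≠ Cz ∧
    H.c1 ∈ Cv ∧ H.c0 ∈ Cz ∧ ∀ k : ℕ, H.f^[k] z ≠ z → H.f^[k] z ∈ Cz

/-- The first return map fixes the local arm at `z` pointing to the critical point
and permutes all other local arms transitively in a single cycle. -/
def OtherArmsTransitive (n : ℕ) (z : X) : Prop :=
  ∀ C ∈ arms z, C ≠ armTo z H.c0 → ∀ C' ∈ arms z, C' ≠ armTo z H.c0 →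
    ∃ j : ℕ, MapsLocalArm (H.f^[n * j]) z C C'

/-- `z` is the characteristic point of an evil periodic orbit of branch points of
exact period `n`. -/
def IsEvilOrbit (z : X) (n : ℕ) : Prop :=
  ExactPeriod H.f z n ∧ (∀ k : ℕ, IsBranchPt (H.f^[k] z)) ∧
    H.IsCharacteristic z ∧ ¬ ArmsTransitive H.f n z

/-- `x` is precritical with `Step(x) = k`: `k ≥ 1` is minimal with `f^[k] x = c₁`. -/
def Step (x : X) (k : ℕ) : Prop :=
  1 ≤ k ∧ H.f^[k] x = H.c1 ∧ ∀ j, 1 ≤ j → j < k → H.f^[j] x ≠ H.c1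

/-- `x` is the closest precritical point `ζ_k`. -/
def IsClosestPrecritical (x : X) (k : ℕ) : Prop :=
  H.Step x k ∧ ∀ j, 1 ≤ j → j < k → H.c1 ∉ H.f^[j] '' (H.arc H.c1 x)

/-- `x` is the earliest precritical point on the set `A`, with `Step(x) = k`:
it is a precritical point on `A` of minimal Step. -/
def IsEarliestPrecriticalOn (A : Set X) (x : X) (k : ℕ) : Prop :=
  x ∈ A ∧ H.Step x k ∧ ∀ y ∈ A, ∀ j : ℕ, H.Step y j → k ≤ j

/-- Marked points: branch points and points of the critical orbit. -/
def MarkedPt (x : X) : Prop :=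
  IsBranchPt x ∨ ∃ k : ℕ, H.f^[k] H.c0 = x

/-- Two marked points are joined by an edge if the arc between them contains no
further marked point. -/
def IsEdge (x y : X) : Prop :=
  H.MarkedPt x ∧ H.MarkedPt y ∧ x ≠ y ∧
    ∀ w ∈ H.arc x y, H.MarkedPt w → w = x ∨ w = y

/-- Equivalence of Hubbard trees: a bijection between the marked points which
conjugates the dynamics and preserves edges. -/
def Equivalent {Y : Type*} [TopologicalSpace Y] (H' : HubbardTree Y) : Prop :=
  ∃ φ : X → Y,
    (∀ x : X, H.MarkedPt x → H'.MarkedPt (φ x)) ∧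
    (∀ x x' : X, H.MarkedPt x → H.MarkedPt x' → φ x = φ x' → x = x') ∧
    (∀ y : Y, H'.MarkedPt y → ∃ x : X, H.MarkedPt x ∧ φ x = y) ∧
    φ H.c0 = H'.c0 ∧
    (∀ x : X, H.MarkedPt x → φ (H.f x) = H'.f (φ x)) ∧
    (∀ x x' : X, H.MarkedPt x → H.MarkedPt x' →
      (H.IsEdge x x' ↔ H'.IsEdge (φ x) (φ x')))

end HubbardTree

/-! ### Combinatorics of kneading sequences -/

/-- The function `ρ_ν(n) = inf { k > n : ν_k ≠ ν_{k-n} } ∈ ℕ ∪ {∞}` (sequences are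
1-indexed). -/
noncomputable def rho (ν : ℕ → Sym) (n : ℕ) : ℕ∞ :=
  sInf {e : ℕ∞ | ∃ j : ℕ, e = (j : ℕ∞) ∧ n < j ∧ ν j ≠ ν (j - n)}

/-- `RhoOrbit ν k m` means that `m` belongs to the `ρ`-orbit
`k → ρ(k) → ρ(ρ(k)) → ⋯` of `k` (stopped before reaching `∞`). -/
inductive RhoOrbit (ν : ℕ → Sym) : ℕ → ℕ → Prop
  | refl (k : ℕ) : RhoOrbit ν k k
  | step {k m j : ℕ} : RhoOrbit ν k m → rho ν m = (j : ℕ∞) → RhoOrbit ν k j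

/-- `m` occurs in the internal address `1 → ρ(1) → ρ(ρ(1)) → ⋯` of `ν`. -/
def InternalAddress (ν : ℕ → Sym) (m : ℕ) : Prop := RhoOrbit ν 1 m

/-- `ν` is a `*`-periodic kneading sequence of (exact) period `n`:
`ν = overline(1 ν₂ … ν_{n-1} *)`. -/
def StarPeriodic (ν : ℕ → Sym) (n : ℕ) : Prop :=
  2 ≤ n ∧ ν 1 = Sym.one ∧ ν n = Sym.star ∧
    (∀ k, 1 ≤ k → ν (k + n) = ν k) ∧
    (∀ k, 1 ≤ k → k < n → ν k ≠ Sym.star)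

/-- `ν` fails the admissibility condition for period `m`. -/
def FailsAdmissibility (ν : ℕ → Sym) (m : ℕ) : Prop :=
  1 ≤ m ∧
  ¬ InternalAddress ν m ∧
  (∀ k : ℕ, k ∣ m → 1 ≤ k → k < m → rho ν k ≤ (m : ℕ∞)) ∧
  ∃ R r : ℕ, rho ν m = (R : ℕ∞) ∧ 1 ≤ r ∧ r ≤ m ∧ r ≡ R [MOD m] ∧ RhoOrbit ν r m

open Classical in
/-- The number `q(m)` of arms predicted by the kneading sequence, where
`ρ(m) = R < ∞` and `r ∈ {1,…,m}` is congruent to `R` modulo `m`. -/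
noncomputable def qArms (ν : ℕ → Sym) (m R r : ℕ) : ℕ :=
  if RhoOrbit ν r m then (R - r) / m + 1 else (R - r) / m + 2


/-! ### Embeddings into the plane and cyclic order of arms -/

/-- Three points in the plane are in (strictly) counterclockwise position. -/
def Ccw (p q r : ℝ × ℝ) : Prop :=
  0 < (q.1 - p.1) * (r.2 - p.2) - (q.2 - p.2) * (r.1 - p.1)

namespace HubbardTree

variable {X : Type*} [TopologicalSpace X] (H : HubbardTree X)

/-- Under an embedding `φ` of the tree into the plane, `p` is a first exit point of
the arm `C` at `x` through the circle of radius `ε` around `φ x`: `p = φ y` for a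
point `y ∈ C` at distance exactly `ε`, such that the arc from `x` to `y` stays
within distance `< ε` before reaching `y`. -/
def ExitPt (φ : X → ℝ × ℝ) (x : X) (C : Set X) (ε : ℝ) (p : ℝ × ℝ) : Prop :=
  ∃ y ∈ C, φ y = p ∧ dist (φ x) p = ε ∧
    ∀ z ∈ H.arc x y, z ≠ y → dist (φ x) (φ z) < ε

/-- The local arms at `x` represented by the arms `C, C', C''` are in
counterclockwise cyclic order under the embedding `φ`. -/
def ArmsCcw (φ : X → ℝ × ℝ) (x : X) (C C' C'' : Set X) : Prop :=
  ∃ ε₀ : ℝ, 0 < ε₀ ∧ ∀ ε : ℝ, 0 < ε → ε < ε₀ →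
    ∀ p p' p'' : ℝ × ℝ, H.ExitPt φ x C ε p → H.ExitPt φ x C' ε p' →
      H.ExitPt φ x C'' ε p'' → Ccw p p' p''

/-- `f` respects the cyclic order (induced by the embedding `φ`) of the local arms
at all branch points. -/
def RespectsCyclicOrder (φ : X → ℝ × ℝ) : Prop :=
  ∀ x : X, IsBranchPt x →
    ∀ C C' C'' : Set X, C ∈ arms x → C' ∈ arms x → C'' ∈ arms x →
      C ≠ C' → C' ≠ C'' → C ≠ C'' → H.ArmsCcw φ x C C' C'' →
      ∀ D D' D'' : Set X, MapsLocalArm H.f x C D → MapsLocalArm H.f x C' D' →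
        MapsLocalArm H.f x C'' D'' → H.ArmsCcw φ (H.f x) D D' D''

/-- The Hubbard tree can be topologically embedded into the plane `ℝ²` so that `f`
respects the cyclic order of the local arms at all branch points. -/
def PlanarEmbeddable : Prop :=
  ∃ φ : X → ℝ × ℝ, Topology.IsEmbedding φ ∧ H.RespectsCyclicOrder φ

end HubbardTree


/-! ### Helper lemmas -/

namespace HubbardTree

open Set Topology

variable {X : Type*} [TopologicalSpace X] (H : HubbardTree X)

theorem arc_of_real {h : ℝ → X} {a b : ℝ} (hab : a < b) (hc : ContinuousOn h (Icc a b))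
    (hi : InjOn h (Icc a b)) : h '' Icc a b = H.arc (h a) (h b) := by
  have := H.t2
  apply H.arc_unique
  right
  have hne : h a ≠ h b := by
    intro he
    have := hi (left_mem_Icc.2 hab.le) (right_mem_Icc.2 hab.le) he
    exact hab.ne this
  have hmem : ∀ t : unitInterval, a + t * (b - a) ∈ Icc a b := by
    intro t
    have h0 := t.2.1
    have h1 := t.2.2
    constructor <;> nlinarith
  have hcont : Continuous (fun t : unitInterval => h (a + t * (b - a))) :=
    hc.comp_continuous (by fun_prop) hmem
  refine ⟨hne, ⟨⟨⟨fun t : unitInterval => h (a + t * (b - a)), hcont⟩, by simp, by simp⟩, ?_, ?_⟩⟩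
  · refine (Continuous.isClosedEmbedding hcont ?_).isEmbedding
    intro s t hst
    have := hi (hmem s) (hmem t) hst
    have h2 : b - a ≠ 0 := sub_ne_zero.2 hab.ne'
    apply Subtype.ext
    apply mul_right_cancel₀ h2
    linarith
  · ext p
    constructor
    · rintro ⟨t, rfl⟩
      exact ⟨_, hmem t, rfl⟩
    · rintro ⟨s, hs, rfl⟩
      have hpos : 0 < b - a := sub_pos.2 hab
      refine ⟨⟨(s - a) / (b - a), div_nonneg (by linarith [hs.1]) hpos.le,
        (div_le_one hpos).2 (by linarith [hs.2])⟩, ?_⟩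
      change h (a + (s - a) / (b - a) * (b - a)) = h s
      congr 1
      field_simp
      ring

theorem arc_self (x : X) : H.arc x x = {x} := by
  rcases H.arc_isArc x x with h | h
  · exact h.2
  · exact absurd rfl h.1

theorem exists_param {x y : X} (hxy : x ≠ y) : ∃ γ : ℝ → X, Continuous γ ∧ γ 0 = x ∧ γ 1 = y ∧
    InjOn γ (Icc 0 1) ∧ γ '' Icc 0 1 = H.arc x y := by
  rcases H.arc_isArc x y with h | ⟨-, γ, hγ, hr⟩
  · exact absurd h.1 hxy
  refine ⟨γ.extend, γ.continuous_extend, by simp, by simp, ?_, ?_⟩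
  · intro s hs t ht hst
    rw [Path.extend_apply _ hs, Path.extend_apply _ ht] at hst
    exact congrArg Subtype.val (hγ.injective hst)
  · rw [← hr]
    ext p
    constructor
    · rintro ⟨s, hs, rfl⟩
      exact ⟨⟨s, hs⟩, (Path.extend_apply _ hs).symm⟩
    · rintro ⟨s, rfl⟩
      exact ⟨s, s.2, Path.extend_apply _ s.2⟩

theorem arc_symm (x y : X) : H.arc x y = H.arc y x := by
  by_cases hxy : x = y
  · rw [hxy]
  obtain ⟨γ, hc, h0, h1, hi, hr⟩ := H.exists_param hxy
  have := H.arc_of_real (h := fun t => γ (1 - t)) (a := 0) (b := 1) one_pos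
    (by fun_prop) (by
      intro s hs t ht hst
      have := hi (x₁ := 1 - s) (x₂ := 1 - t) ⟨by linarith [hs.2], by linarith [hs.1]⟩
        ⟨by linarith [ht.2], by linarith [ht.1]⟩ hst
      linarith)
  simp only [sub_zero, sub_self, h0, h1] at this
  rw [← this, ← hr]
  ext p
  constructor
  · rintro ⟨s, hs, rfl⟩
    exact ⟨1 - s, ⟨by linarith [hs.2], by linarith [hs.1]⟩, by simp⟩
  · rintro ⟨s, hs, rfl⟩
    exact ⟨1 - s, ⟨by linarith [hs.2], by linarith [hs.1]⟩, rfl⟩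

theorem left_mem (x y : X) : x ∈ H.arc x y := by
  by_cases hxy : x = y
  · rw [hxy, arc_self]; rfl
  obtain ⟨γ, hc, h0, h1, hi, hr⟩ := H.exists_param hxy
  rw [← hr]; exact ⟨0, by simp, h0⟩

theorem right_mem (x y : X) : y ∈ H.arc x y := by
  rw [arc_symm]; exact H.left_mem y x

theorem arc_compact (x y : X) : IsCompact (H.arc x y) := by
  by_cases hxy : x = y
  · rw [hxy, arc_self]; exact isCompact_singleton
  obtain ⟨γ, hc, h0, h1, hi, hr⟩ := H.exists_param hxy
  rw [← hr]; exact isCompact_Icc.image hc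

theorem arc_closed (x y : X) : IsClosed (H.arc x y) := by
  have := H.t2
  exact (H.arc_compact x y).isClosed

theorem arc_conn (x y : X) : IsPreconnected (H.arc x y) := by
  by_cases hxy : x = y
  · rw [hxy, arc_self]; exact isPreconnected_singleton
  obtain ⟨γ, hc, h0, h1, hi, hr⟩ := H.exists_param hxy
  rw [← hr]; exact isPreconnected_Icc.image _ hc.continuousOn

/-- subarcs. -/
theorem sub_left {x y p : X} (hp : p ∈ H.arc x y) : H.arc x p ⊆ H.arc x y := by
  by_cases hxy : x = y
  · subst hxy; rw [arc_self] at hp; rw [hp]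
  obtain ⟨γ, hc, h0, h1, hi, hr⟩ := H.exists_param hxy
  rw [← hr] at hp
  obtain ⟨t, ht, rfl⟩ := hp
  rcases eq_or_lt_of_le ht.1 with h | h
  · rw [← h, h0, arc_self]; rintro _ rfl; exact H.left_mem _ _
  have := H.arc_of_real (h := γ) h hc.continuousOn (hi.mono (Icc_subset_Icc le_rfl ht.2))
  rw [← h0, ← this, h0, ← hr]
  exact image_mono (Icc_subset_Icc le_rfl ht.2)

theorem sub_right {x y p : X} (hp : p ∈ H.arc x y) : H.arc p y ⊆ H.arc x y := by
  rw [arc_symm H x, arc_symm H p]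
  rw [arc_symm] at hp
  exact H.sub_left hp

theorem sub_avoid {x y p : X} (hp : p ∈ H.arc x y) (hpx : p ≠ x) : x ∉ H.arc p y := by
  by_cases hxy : x = y
  · subst hxy; rw [arc_self] at hp; exact absurd hp hpx
  obtain ⟨γ, hc, h0, h1, hi, hr⟩ := H.exists_param hxy
  rw [← hr] at hp
  obtain ⟨t, ht, rfl⟩ := hp
  have ht0 : 0 < t := lt_of_le_of_ne ht.1 (by rintro rfl; exact hpx h0)
  rcases eq_or_lt_of_le ht.2 with h | h
  · rw [h, h1, arc_self]; exact hxy
  have := H.arc_of_real (h := γ) h hc.continuousOn (hi.mono (Icc_subset_Icc ht.1 le_rfl))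
  rw [← h1, ← this]
  rintro ⟨s, hs, hse⟩
  have := hi (x₁ := s) (x₂ := 0) ⟨ht.1.trans hs.1, hs.2⟩ (by simp) (hse.trans h0.symm)
  linarith [hs.1]

theorem concat {p r q : X} (hd : ∀ s, s ∈ H.arc p r → s ∈ H.arc r q → s = r) :
    H.arc p q = H.arc p r ∪ H.arc r q := by
  by_cases hpr : p = r
  · subst hpr
    rw [arc_self, union_eq_right.2]
    rintro _ rfl; exact H.left_mem _ _
  by_cases hrq : r = q
  · subst hrq
    rw [arc_self, union_eq_left.2]
    rintro _ rfl; exact H.right_mem _ _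
  obtain ⟨γ, hc, h0, h1, hi, hr⟩ := H.exists_param hpr
  obtain ⟨δ, hc', h0', h1', hi', hr'⟩ := H.exists_param hrq
  set h : ℝ → X := fun t => if t ≤ 1 then γ t else δ (t - 1) with hh
  have hcont : Continuous h := by
    apply Continuous.if_le hc (by fun_prop) continuous_id continuous_const
    rintro x rfl
    simp [h1, h0']
  have hle : ∀ t, t ≤ 1 → h t = γ t := fun t ht => if_pos ht
  have hge : ∀ t, 1 ≤ t → h t = δ (t - 1) := by
    intro t ht
    rcases eq_or_lt_of_le ht with rfl | h'
    · rw [hle _ le_rfl, h1, sub_self, h0']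
    · exact if_neg (not_le.2 h')
  have key : ∀ s t : ℝ, 0 ≤ s → s ≤ 1 → 1 < t → t ≤ 2 → h s ≠ h t := by
    intro s t hs0 hs1 ht1 ht2 he
    rw [hle s hs1, hge t ht1.le] at he
    have e1 : δ (t - 1) ∈ H.arc r q := by
      rw [← hr']; exact ⟨_, ⟨by linarith, by linarith⟩, rfl⟩
    have e2 : γ s ∈ H.arc p r := by
      rw [← hr]; exact ⟨_, ⟨by linarith, by linarith⟩, rfl⟩
    have := hd _ e2 (he ▸ e1)
    have e3 : δ (t - 1) = δ 0 := by rw [← he, this, h0']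
    have := hi' ⟨by linarith, by linarith⟩ (by simp) e3
    linarith
  have hinj : InjOn h (Icc 0 2) := by
    intro s hs t ht he
    rcases le_or_gt s 1 with h1s | h1s <;> rcases le_or_gt t 1 with h1t | h1t
    · rw [hle _ h1s, hle _ h1t] at he
      exact hi ⟨hs.1, h1s⟩ ⟨ht.1, h1t⟩ he
    · exact absurd he (key s t hs.1 h1s h1t ht.2)
    · exact absurd he.symm (key t s ht.1 h1t h1s hs.2)
    · rw [hge _ h1s.le, hge _ h1t.le] at he
      have := hi' (x₁ := s - 1) (x₂ := t - 1) ⟨by linarith, by linarith [hs.2]⟩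
        ⟨by linarith, by linarith [ht.2]⟩ he
      linarith
  have := H.arc_of_real (h := h) two_pos hcont.continuousOn hinj
  have e0 : h 0 = p := by rw [hle _ zero_le_one, h0]
  have e2 : h 2 = q := by rw [hge _ one_le_two, ← h1']; norm_num
  rw [e0, e2] at this
  rw [← this, ← hr, ← hr']
  ext w
  constructor
  · rintro ⟨s, hs, rfl⟩
    rcases le_total s 1 with h1s | h1s
    · left; exact ⟨s, ⟨hs.1, h1s⟩, (hle _ h1s).symm⟩
    · right; exact ⟨s - 1, ⟨by linarith, by linarith [hs.2]⟩, (hge _ h1s).symm⟩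
  · rintro (⟨s, hs, rfl⟩ | ⟨s, hs, rfl⟩)
    · exact ⟨s, ⟨hs.1, by linarith [hs.2]⟩, hle _ hs.2⟩
    · refine ⟨s + 1, ⟨by linarith [hs.1], by linarith [hs.2]⟩, ?_⟩
      rw [hge _ (by linarith [hs.1])]; simp

theorem triangle (p z q : X) : H.arc p q ⊆ H.arc p z ∪ H.arc z q := by
  by_cases hpz : p = z
  · subst hpz; exact subset_union_right
  obtain ⟨γ, hc, h0, h1, hi, hr⟩ := H.exists_param hpz
  set S : Set ℝ := Icc 0 1 ∩ γ ⁻¹' H.arc z q with hS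
  have hSc : IsCompact S := isCompact_Icc.inter_right ((H.arc_closed _ _).preimage hc)
  have hSn : S.Nonempty := ⟨1, by simp, by simp [h1, left_mem]⟩
  obtain ⟨t, ht, htm⟩ := hSc.exists_isLeast hSn
  have hrpz : γ t ∈ H.arc p z := by rw [← hr]; exact ⟨t, ht.1, rfl⟩
  have := H.concat (p := p) (r := γ t) (q := q) (by
    intro s hs hs'
    rcases eq_or_lt_of_le ht.1.1 with h | h
    · rw [← h, h0, arc_self] at hs
      rw [← h, h0]; exact hs
    have e := H.arc_of_real (h := γ) h hc.continuousOn (hi.mono (Icc_subset_Icc le_rfl ht.1.2))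
    rw [h0] at e
    rw [← e] at hs
    obtain ⟨u, hu, rfl⟩ := hs
    have : u ∈ S := ⟨⟨hu.1, hu.2.trans ht.1.2⟩, H.sub_right ht.2 hs'⟩
    have := htm this
    rw [le_antisymm hu.2 this])
  rw [this]
  exact union_subset_union (H.sub_left hrpz) (H.sub_right ht.2)

/-! arms -/

theorem arm_eq {x p : X} {C : Set X} (hC : C ∈ arms x) (hp : p ∈ C) : C = armTo x p := by
  obtain ⟨y, hy, rfl⟩ := hC
  exact connectedComponentIn_eq hp

theorem arm_unique {x p : X} {C D : Set X} (hC : C ∈ arms x) (hD : D ∈ arms x) (hp : p ∈ C)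
    (hp' : p ∈ D) : C = D := (arm_eq hC hp).trans (arm_eq hD hp').symm

theorem not_mem_arm {x : X} {C : Set X} (hC : C ∈ arms x) : x ∉ C := by
  obtain ⟨y, hy, rfl⟩ := hC
  intro h
  exact connectedComponentIn_subset _ _ h rfl

theorem mem_armTo {x y : X} (h : y ≠ x) : y ∈ armTo x y := mem_connectedComponentIn h

theorem armTo_mem {x y : X} (h : y ≠ x) : armTo x y ∈ arms x := ⟨y, h, rfl⟩

theorem arm_nonempty {x : X} {C : Set X} (hC : C ∈ arms x) : C.Nonempty := by
  obtain ⟨y, hy, rfl⟩ := hC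
  exact ⟨y, mem_connectedComponentIn hy⟩

theorem conn_arm {x p q : X} {C S : Set X} (hC : C ∈ arms x) (hp : p ∈ C) (hS : IsPreconnected S)
    (hpS : p ∈ S) (hqS : q ∈ S) (hx : x ∉ S) : q ∈ C := by
  rw [arm_eq hC hp]
  exact hS.subset_connectedComponentIn hpS (fun s hs (h : s = x) => hx (h ▸ hs)) hqS

theorem arc_mem_arm {x y q : X} {C : Set X} (hC : C ∈ arms x) (hy : y ∈ C) (hq : q ∈ H.arc x y)
    (hqx : q ≠ x) : q ∈ C :=
  conn_arm hC hy (H.arc_conn q y) (H.right_mem _ _) (H.left_mem _ _) (H.sub_avoid hq hqx)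

/-- points near the root on an arc -/
theorem near_on_arc {x y : X} (hy : y ≠ x) {V : Set X} (hV : V ∈ 𝓝 x) :
    ∃ p ∈ H.arc x y, p ≠ x ∧ p ∈ V := by
  obtain ⟨γ, hc, h0, h1, hi, hr⟩ := H.exists_param hy.symm
  have : γ ⁻¹' V ∈ 𝓝 (0:ℝ) := hc.continuousAt.preimage_mem_nhds (by rwa [h0])
  obtain ⟨ε, hε, hb⟩ := Metric.mem_nhds_iff.1 this
  have hpos : 0 < min (ε/2) 1 := by positivity
  have hm : min (ε/2) 1 ∈ Icc (0:ℝ) 1 := ⟨hpos.le, min_le_right _ _⟩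
  refine ⟨γ (min (ε/2) 1), ?_, ?_, ?_⟩
  · rw [← hr]; exact ⟨_, hm, rfl⟩
  · intro he
    have := hi hm (by simp) (he.trans h0.symm)
    linarith
  · apply hb
    rw [Metric.mem_ball, Real.dist_eq, sub_zero, abs_of_pos hpos]
    exact (min_le_left _ _).trans_lt (by linarith)

theorem near_arm (H : HubbardTree X) {x : X} {C : Set X} (hC : C ∈ arms x) {V : Set X} (hV : V ∈ 𝓝 x) :
    ∃ p ∈ C, p ∈ V := by
  obtain ⟨y, hy⟩ := arm_nonempty hC
  obtain ⟨p, hp, hpx, hpV⟩ := H.near_on_arc (fun h : y = x => not_mem_arm hC (h ▸ hy)) hV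
  exact ⟨p, H.arc_mem_arm hC hy hp hpx, hpV⟩

theorem arm_preconn {x : X} {C : Set X} (hC : C ∈ arms x) : IsPreconnected C := by
  obtain ⟨y, hy, rfl⟩ := hC
  exact isPreconnected_connectedComponentIn

theorem arm_insert_closed (H : HubbardTree X) {x : X} {C : Set X} (hC : C ∈ arms x) : IsClosed (insert x C) := by
  have := H.t2
  apply isClosed_of_closure_subset
  rw [Set.insert_eq, closure_union, closure_singleton]
  apply union_subset subset_union_left
  intro q hq
  by_cases hqx : q = x
  · left; exact hqx
  right
  obtain ⟨y, hy⟩ := arm_nonempty hC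
  refine conn_arm hC hy ((arm_preconn hC).subset_closure (subset_insert q C)
    (insert_subset hq subset_closure)) (mem_insert_of_mem _ hy) (mem_insert _ _) ?_
  rintro (h | h)
  · exact hqx h.symm
  · exact not_mem_arm hC h

theorem arm_open (H : HubbardTree X) {x : X} {C : Set X} (hC : C ∈ arms x) : IsOpen C := by
  have := H.t2
  have hcl : IsClosed ({x} ∪ ⋃ D ∈ arms x \ {C}, insert x D) := by
    apply isClosed_singleton.union
    exact ((H.arms_finite x).subset diff_subset).isClosed_biUnion
      fun D hD => H.arm_insert_closed hD.1
  convert hcl.isOpen_compl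
  ext p
  simp only [mem_compl_iff, mem_union, mem_singleton_iff, mem_iUnion, not_or, not_exists]
  constructor
  · intro hp
    have hpx : p ≠ x := fun h => not_mem_arm hC (h ▸ hp)
    refine ⟨hpx, ?_⟩
    rintro D ⟨hD, hDC⟩ (h | h)
    · exact hpx h
    · exact hDC (arm_unique hD hC h hp)
  · rintro ⟨hpx, h⟩
    by_contra hpC
    refine h (armTo x p) ⟨armTo_mem hpx, ?_⟩ (mem_insert_of_mem _ (mem_armTo hpx))
    intro he
    rw [mem_singleton_iff] at he
    exact hpC (he ▸ mem_armTo hpx)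

theorem endpt_above (x y0 : X) (hy0 : y0 ≠ x) : ∃ e, IsEndpoint e ∧ y0 ∈ H.arc x e := by
  have := H.t2
  have := H.compact
  set R : X → X → Prop := fun a b => b ∉ armTo a x with hR
  have hrefl : ∀ a, R a a := by
    intro a h
    exact connectedComponentIn_subset _ _ h rfl
  have htrans : ∀ a b c, R a b → R b c → R a c := by
    intro a b c hab hbc hc
    have hax : a ≠ x := by
      rintro rfl
      have : armTo a a = ∅ := connectedComponentIn_eq_empty (by simp)
      rw [this] at hc
      exact hc
    exact hbc (isPreconnected_connectedComponentIn.subset_connectedComponentIn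
      (mem_armTo hax.symm) (fun s hs (h : s = b) => hab (h ▸ hs)) hc)
  have hclosed : ∀ a, IsClosed {b | R a b} := by
    intro a
    by_cases hax : a = x
    · subst hax
      have : armTo a a = ∅ := connectedComponentIn_eq_empty (by simp)
      simp [hR, this]
    · exact (H.arm_open (armTo_mem (Ne.symm hax))).isClosed_compl
  obtain ⟨⟨m, hm⟩, hmax⟩ := exists_maximal_of_chains_bounded
    (α := {b // R y0 b}) (r := fun a b => R a.1 b.1) (by
    intro c hc
    rcases c.eq_empty_or_nonempty with rfl | ⟨a0, ha0⟩
    · exact ⟨⟨y0, hrefl _⟩, by simp⟩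
    have : Nonempty c := ⟨⟨a0, ha0⟩⟩
    obtain ⟨b, hb⟩ := IsCompact.nonempty_iInter_of_directed_nonempty_isCompact_isClosed
      (fun a : c => {b | R a.1.1 b}) (by
        intro a b
        by_cases hab : a = b
        · exact ⟨a, subset_rfl, by rw [hab]⟩
        rcases hc a.2 b.2 (fun h => hab (Subtype.ext h)) with h | h
        · exact ⟨b, fun d hd => htrans _ _ _ h hd, subset_rfl⟩
        · exact ⟨a, subset_rfl, fun d hd => htrans _ _ _ h hd⟩)
      (fun a => ⟨a.1.1, hrefl _⟩) (fun a => (hclosed _).isCompact) (fun a => hclosed _)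
    rw [mem_iInter] at hb
    refine ⟨⟨b, htrans _ _ _ a0.2 (hb ⟨a0, ha0⟩)⟩, fun a ha => hb ⟨a, ha⟩⟩)
    (fun {a b c} => htrans a.1 b.1 c.1)
  have hmx : m ≠ x := by
    rintro rfl
    exact hm (mem_armTo hy0.symm)
  refine ⟨m, ?_, ?_⟩
  · by_contra hend
    have : ∃ D ∈ arms m, D ≠ armTo m x := by
      by_contra! hcon
      apply hend
      have : arms m = {armTo m x} := by
        ext D
        constructor
        · exact hcon D
        · rintro rfl; exact armTo_mem hmx.symm
      rw [IsEndpoint, this, ncard_singleton]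
    obtain ⟨D, hD, hne⟩ := this
    obtain ⟨a, ha⟩ := arm_nonempty hD
    have hma : R m a := fun h => hne (arm_unique hD (armTo_mem hmx.symm) ha h)
    have ham := hmax ⟨a, htrans _ _ _ hm hma⟩ hma
    apply ham
    have hax : a ≠ x := by
      rintro rfl
      exact hma (mem_armTo hmx.symm)
    have hmcl : m ∈ closure (armTo m x) := by
      rw [mem_closure_iff_nhds]
      intro V hV
      obtain ⟨p, hp, hpV⟩ := H.near_arm (armTo_mem hmx.symm) hV
      exact ⟨p, hpV, hp⟩
    refine conn_arm (S := insert m (armTo m x)) (armTo_mem hax.symm) (mem_armTo hax.symm)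
      ((arm_preconn (armTo_mem hmx.symm)).subset_closure (subset_insert _ _)
      (insert_subset hmcl subset_closure)) (mem_insert_of_mem _ (mem_armTo hmx.symm))
      (mem_insert _ _) ?_
    rintro (h | h)
    · exact not_mem_arm hD (h ▸ ha)
    · exact hma h
  · by_contra hy
    exact hm (conn_arm (armTo_mem hy0.symm) (mem_armTo hy0.symm) (H.arc_conn x m)
      (H.left_mem _ _) (H.right_mem _ _) hy)

/-- arms are arcwise connected -/
theorem arm_arc {z p q : X} {C : Set X} (hC : C ∈ arms z) (hp : p ∈ C) (hq : q ∈ C) :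
    z ∉ H.arc p q := by
  intro hz
  set E1 : Set X := {e | IsEndpoint e ∧ z ∉ H.arc p e} with hE1
  set E2 : Set X := {e | IsEndpoint e ∧ z ∈ H.arc p e} with hE2
  have hc1 : IsClosed (⋃ e ∈ E1, H.arc z e) :=
    (H.endpoint_finite.subset fun e he => he.1).isClosed_biUnion fun e _ => H.arc_closed _ _
  have hc2 : IsClosed (⋃ e ∈ E2, H.arc z e) :=
    (H.endpoint_finite.subset fun e he => he.1).isClosed_biUnion fun e _ => H.arc_closed _ _
  have k1 : ∀ r e, r ≠ z → r ∈ H.arc z e → (z ∈ H.arc p r ↔ z ∈ H.arc p e) := by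
    intro r e hr hre
    have hav := H.sub_avoid hre hr
    constructor
    · intro h
      rcases H.triangle p e r h with h | h
      · exact h
      · rw [arc_symm] at h; exact absurd h hav
    · intro h
      rcases H.triangle p r e h with h | h
      · exact h
      · exact absurd h hav
  have hne : ∀ r ∈ C, r ≠ z := fun r hr h => not_mem_arm hC (h ▸ hr)
  have hcov : ∀ r ∈ C, ∃ e, IsEndpoint e ∧ r ∈ H.arc z e := fun r hr =>
    H.endpt_above z r (hne r hr)
  have := isPreconnected_closed_iff.1 (arm_preconn hC) _ _ hc1 hc2 (by
    intro r hr
    obtain ⟨e, he, hre⟩ := hcov r hr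
    by_cases h : z ∈ H.arc p e
    · right; exact mem_biUnion (show e ∈ E2 from ⟨he, h⟩) hre
    · left; exact mem_biUnion (show e ∈ E1 from ⟨he, h⟩) hre)
    (by
      obtain ⟨e, he, hre⟩ := hcov p hp
      refine ⟨p, hp, mem_biUnion (show e ∈ E1 from ⟨he, ?_⟩) hre⟩
      rw [← k1 p e (hne p hp) hre, arc_self]
      exact fun h => hne p hp h.symm)
    (by
      obtain ⟨e, he, hre⟩ := hcov q hq
      refine ⟨q, hq, mem_biUnion (show e ∈ E2 from ⟨he, ?_⟩) hre⟩
      rwa [← k1 q e (hne q hq) hre])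
  obtain ⟨r, hr, h1, h2⟩ := this
  simp only [mem_iUnion] at h1 h2
  obtain ⟨e1, he1, hr1⟩ := h1
  obtain ⟨e2, he2, hr2⟩ := h2
  exact he1.2 ((k1 r e1 (hne r hr) hr1).1 ((k1 r e2 (hne r hr) hr2).2 he2.2))

/-- local arc-connectedness -/
theorem local_arc (z : X) {U : Set X} (hU : U ∈ 𝓝 z) : ∃ V ∈ 𝓝 z, V ⊆ U ∧
    ∀ p ∈ V, H.arc z p ⊆ U := by
  have := H.t2
  have key : ∀ e : X, ∃ K : Set X, IsClosed K ∧ z ∉ K ∧ ∀ p ∈ H.arc z e, p ∉ K → H.arc z p ⊆ U := by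
    intro e
    by_cases hze : z = e
    · subst hze
      refine ⟨∅, isClosed_empty, by simp, ?_⟩
      intro p hp _
      rw [arc_self] at hp
      rw [hp, arc_self]
      rintro _ rfl; exact mem_of_mem_nhds hU
    obtain ⟨γ, hc, h0, h1, hi, hr⟩ := H.exists_param hze
    have : γ ⁻¹' U ∈ 𝓝 (0:ℝ) := hc.continuousAt.preimage_mem_nhds (by rwa [h0])
    obtain ⟨ε, hε, hb⟩ := Metric.mem_nhds_iff.1 this
    refine ⟨γ '' Icc ε 1, (isCompact_Icc.image hc).isClosed, ?_, ?_⟩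
    · rintro ⟨t, ht, he⟩
      have := hi (x₁ := t) (x₂ := 0) ⟨by linarith [ht.1], ht.2⟩ (by simp) (he.trans h0.symm)
      linarith [ht.1]
    · intro p hp hpK
      rw [← hr] at hp
      obtain ⟨t, ht, rfl⟩ := hp
      have htε : t < ε := by
        by_contra hcon
        exact hpK ⟨t, ⟨not_lt.1 hcon, ht.2⟩, rfl⟩
      rcases eq_or_lt_of_le ht.1 with h | h
      · rw [← h, h0, arc_self]; rintro _ rfl; exact mem_of_mem_nhds hU
      have := H.arc_of_real (h := γ) h hc.continuousOn (hi.mono (Icc_subset_Icc le_rfl ht.2))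
      rw [h0] at this
      rw [← this]
      rintro _ ⟨s, hs, rfl⟩
      apply hb
      rw [Metric.mem_ball, Real.dist_eq, sub_zero, abs_of_nonneg hs.1]
      linarith [hs.2]
  choose K hKc hKz hK using key
  have hcl : IsClosed (⋃ e ∈ {e : X | IsEndpoint e}, K e) :=
    H.endpoint_finite.isClosed_biUnion fun e _ => hKc e
  have hmain : ∀ p ∈ (⋃ e ∈ {e : X | IsEndpoint e}, K e)ᶜ, H.arc z p ⊆ U := by
    intro p hp
    by_cases hpz : p = z
    · rw [hpz, arc_self]; rintro _ rfl; exact mem_of_mem_nhds hU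
    obtain ⟨e, he, hpe⟩ := H.endpt_above z p hpz
    refine hK e p hpe fun h => hp (mem_biUnion (show e ∈ {e : X | IsEndpoint e} from he) h)
  refine ⟨_, hcl.isOpen_compl.mem_nhds ?_, ?_, hmain⟩
  · intro h
    simp only [mem_iUnion] at h
    obtain ⟨e, _, h⟩ := h
    exact hKz e h
  · intro p hp
    exact hmain p hp (H.right_mem _ _)

theorem no_loop (H : HubbardTree X) {h : ℝ → X} {s u : ℝ} (hsu : s < u) (hc : Continuous h)
    (hi : InjOn h (Ico s u)) (he : h s = h u) : False := by
  set m := (s + u) / 2 with hm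
  have hsm : s < m := by linarith
  have hmu : m < u := by linarith
  have h1 := H.arc_of_real hsm hc.continuousOn (hi.mono (show Icc s m ⊆ Ico s u from fun t ht => ⟨ht.1, ht.2.trans_lt hmu⟩))
  have hne : ∀ t, s < t → t < u → h t ≠ h u := by
    intro t h1 h2 h3
    have := hi ⟨h1.le, h2⟩ ⟨le_rfl, hsu⟩ (h3.trans he.symm)
    linarith
  have h2 := H.arc_of_real hmu hc.continuousOn (by
    intro x hx y hy hxy
    rcases eq_or_lt_of_le hx.2 with rfl | hx'
    · rcases eq_or_lt_of_le hy.2 with rfl | hy'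
      · rfl
      · exact absurd hxy.symm (hne y (hsm.trans_le hy.1) hy')
    · rcases eq_or_lt_of_le hy.2 with rfl | hy'
      · exact absurd hxy (hne x (hsm.trans_le hx.1) hx')
      · exact hi ⟨hsm.le.trans hx.1, hx'⟩ ⟨hsm.le.trans hy.1, hy'⟩ hxy)
  rw [← he, arc_symm, ← h1] at h2
  have : h ((s + m) / 2) ∈ h '' Icc s m := ⟨_, ⟨by linarith, by linarith⟩, rfl⟩
  rw [← h2] at this
  obtain ⟨v, hv, hve⟩ := this
  rcases eq_or_lt_of_le hv.2 with hvu | hv'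
  · rw [hvu] at hve
    exact hne _ (by linarith) (by linarith) hve.symm
  · have := hi ⟨hsm.le.trans hv.1, hv'⟩ ⟨by linarith, by linarith⟩ hve
    linarith [hv.1]

theorem inj_of_local_on (H : HubbardTree X) {h : ℝ → X} {a b : ℝ} (hc : Continuous h)
    (hl : ∀ t ∈ Icc a b, ∃ U ∈ 𝓝 t, InjOn h (U ∩ Icc a b)) : InjOn h (Icc a b) := by
  have := H.t2
  have hl' : ∀ t : ℝ, ∃ U : Set ℝ, IsOpen U ∧ (t ∈ Icc a b → t ∈ U) ∧ InjOn h (U ∩ Icc a b) := by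
    intro t
    by_cases ht : t ∈ Icc a b
    · obtain ⟨U, hU, hi⟩ := hl t ht
      obtain ⟨V, hVU, hVo, htV⟩ := mem_nhds_iff.1 hU
      exact ⟨V, hVo, fun _ => htV, hi.mono (inter_subset_inter_left _ hVU)⟩
    · exact ⟨∅, isOpen_empty, fun h => absurd h ht, by simp⟩
  choose U hUo hUm hUi using hl'
  set W : Set (ℝ × ℝ) := ⋃ t, U t ×ˢ U t with hW
  have hWo : IsOpen W := isOpen_iUnion fun t => (hUo t).prod (hUo t)
  set P : Set (ℝ × ℝ) := (Icc a b ×ˢ Icc a b) ∩ ({q | q.1 ≤ q.2} ∩ {q | h q.1 = h q.2} ∩ Wᶜ)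
    with hP
  have hPc : IsCompact P := by
    apply (isCompact_Icc.prod isCompact_Icc).inter_right
    refine (IsClosed.inter ?_ ?_).inter hWo.isClosed_compl
    · exact isClosed_le continuous_fst continuous_snd
    · exact isClosed_eq (hc.comp continuous_fst) (hc.comp continuous_snd)
  have hPm : ∀ s u, s ∈ Icc a b → u ∈ Icc a b → s < u → h s = h u → (s, u) ∈ P := by
    intro s u hs hu hsu he
    refine ⟨⟨hs, hu⟩, ⟨hsu.le, he⟩, ?_⟩
    intro hw
    obtain ⟨t, ht⟩ := mem_iUnion.1 hw
    exact hsu.ne (hUi t ⟨ht.1, hs⟩ ⟨ht.2, hu⟩ he)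
  have hPe : P = ∅ := by
    by_contra hne
    obtain ⟨⟨s, u⟩, hq, hmin⟩ := hPc.exists_isMinOn (nonempty_iff_ne_empty.2 hne)
      (f := fun q => q.2 - q.1) (by fun_prop)
    obtain ⟨⟨hs, hu⟩, ⟨hle, he⟩, hw⟩ := hq
    simp only [mem_setOf_eq] at hs hu hle he
    have hsu : s < u := by
      refine lt_of_le_of_ne hle ?_
      rintro rfl
      exact hw (mem_iUnion.2 ⟨s, hUm s hs, hUm s hs⟩)
    have hmain : ∀ x y, s ≤ x → x < y → y < u → h x ≠ h y := by
      intro x y h1 h2 h3 h4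
      have := hmin (hPm x y ⟨hs.1.trans h1, by linarith [hu.2]⟩
        ⟨by linarith [hs.1], by linarith [hu.2]⟩ h2 h4)
      simp only [mem_setOf_eq] at this
      linarith
    refine no_loop H hsu hc ?_ he
    intro x hx y hy hxy
    rcases lt_trichotomy x y with h' | h' | h'
    · exact absurd hxy (hmain x y hx.1 h' hy.2)
    · exact h'
    · exact absurd hxy.symm (hmain y x hy.1 h' hx.2)
  intro x hx y hy hxy
  rcases lt_trichotomy x y with h' | h' | h'
  · have := hPm x y hx hy h' hxy
    rw [hPe] at this; exact this.elim
  · exact h'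
  · have := hPm y x hy hx h' hxy.symm
    rw [hPe] at this; exact this.elim

theorem arc_inj {w y : X} {g : X → X} (hg : Continuous g)
    (hloc : ∀ p ∈ H.arc w y, p ≠ y → ∃ U ∈ 𝓝 p, InjOn g U) : InjOn g (H.arc w y) := by
  by_cases hwy : w = y
  · rw [hwy, arc_self]; exact injOn_singleton _ _
  obtain ⟨γ, hc, h0, h1, hi, hr⟩ := H.exists_param hwy
  have hc' : Continuous (g ∘ γ) := hg.comp hc
  have hlt : ∀ s t, 0 ≤ s → s < t → t < 1 → g (γ s) ≠ g (γ t) := by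
    intro s t hs hst ht he
    have hmem : ∀ r ∈ Icc s t, γ r ∈ H.arc w y := by
      intro r hr'
      rw [← hr]
      exact ⟨r, ⟨by linarith [hr'.1], by linarith [hr'.2]⟩, rfl⟩
    have hne : ∀ r ∈ Icc s t, γ r ≠ y := by
      intro r hr' h
      have := hi (x₁ := r) (x₂ := 1) ⟨by linarith [hr'.1], by linarith [hr'.2]⟩ (by simp)
        (h.trans h1.symm)
      linarith [hr'.2]
    have key : InjOn (g ∘ γ) (Icc s t) := by
      exact (H.inj_of_local_on hc' fun r hr' => by
        obtain ⟨U, hU, hUi⟩ := hloc _ (hmem r hr') (hne r hr')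
        refine ⟨γ ⁻¹' U, hc.continuousAt.preimage_mem_nhds hU, ?_⟩
        intro a ha b hb hab
        have := hUi ha.1 hb.1 hab
        exact hi ⟨by linarith [ha.2.1], by linarith [ha.2.2]⟩
          ⟨by linarith [hb.2.1], by linarith [hb.2.2]⟩ this)
    exact hst.ne (key ⟨le_rfl, hst.le⟩ ⟨hst.le, le_rfl⟩ he)
  have hlt' : ∀ s t, 0 ≤ s → s < t → t ≤ 1 → g (γ s) ≠ g (γ t) := by
    intro s t hs hst ht he
    rcases eq_or_lt_of_le ht with rfl | ht'
    · refine no_loop H hst hc' ?_ he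
      intro a ha b hb hab
      rcases lt_trichotomy a b with h' | h' | h'
      · exact absurd hab (hlt a b (hs.trans ha.1) h' hb.2)
      · exact h'
      · exact absurd hab.symm (hlt b a (hs.trans hb.1) h' ha.2)
    · exact hlt s t hs hst ht' he
  rw [← hr]
  rintro _ ⟨a, ha, rfl⟩ _ ⟨b, hb, rfl⟩ hab
  rcases lt_trichotomy a b with h' | h' | h'
  · exact absurd hab (hlt' a b ha.1 h' hb.2)
  · rw [h']
  · exact absurd hab.symm (hlt' b a hb.1 h' ha.2)

theorem arc_image {w y : X} {g : X → X} (hg : Continuous g) (hi : InjOn g (H.arc w y)) :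
    g '' H.arc w y = H.arc (g w) (g y) := by
  by_cases hwy : w = y
  · rw [hwy, arc_self, arc_self, image_singleton]
  obtain ⟨γ, hc, h0, h1, hi', hr⟩ := H.exists_param hwy
  have := H.arc_of_real (h := g ∘ γ) one_pos (hg.comp hc).continuousOn
    (hi.comp hi' (by rw [← hr]; exact mapsTo_image _ _))
  rw [image_comp, hr] at this
  rw [this]; simp [h0, h1]

theorem mla_comp {g h : X → X} {x : X} {C D E : Set X} (hg : ContinuousAt g x)
    (h1 : MapsLocalArm g x C D) (h2 : MapsLocalArm h (g x) D E) : MapsLocalArm (h ∘ g) x C E := by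
  obtain ⟨hC, hD, U, hU, hUs⟩ := h1
  obtain ⟨-, hE, V, hV, hVs⟩ := h2
  refine ⟨hC, hE, U ∩ g ⁻¹' V, Filter.inter_mem hU (hg.preimage_mem_nhds hV), ?_⟩
  rintro _ ⟨p, ⟨hpC, hpU, hpV⟩, rfl⟩
  exact hVs ⟨g p, ⟨hUs ⟨p, ⟨hpC, hpU⟩, rfl⟩, hpV⟩, rfl⟩

theorem mla_exists (H : HubbardTree X) {g : X → X} {x : X} {C : Set X} (hg : Continuous g)
    (hl : ∃ U ∈ 𝓝 x, InjOn g U) (hC : C ∈ arms x) : ∃ D, MapsLocalArm g x C D := by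
  obtain ⟨U, hU, hi⟩ := hl
  obtain ⟨V, hV, hVU, hVa⟩ := H.local_arc x hU
  obtain ⟨p, hpC, hpV⟩ := H.near_arm hC hV
  have hxU := mem_of_mem_nhds hU
  have hpx : p ≠ x := fun h => not_mem_arm hC (h ▸ hpC)
  have hgp : g p ≠ g x := fun h => hpx (hi (hVU hpV) hxU h)
  refine ⟨armTo (g x) (g p), hC, armTo_mem hgp, V, hV, ?_⟩
  rintro _ ⟨q, ⟨hqC, hqV⟩, rfl⟩
  refine conn_arm (armTo_mem hgp) (mem_armTo hgp) ((H.arc_conn p q).image g hg.continuousOn)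
    ⟨p, H.left_mem _ _, rfl⟩ ⟨q, H.right_mem _ _, rfl⟩ ?_
  rintro ⟨r, hr, he⟩
  have hrU : r ∈ U := by
    rcases H.triangle p x q hr with h | h
    · rw [arc_symm] at h; exact hVa p hpV h
    · exact hVa q hqV h
  have := hi hrU hxU he
  subst this
  exact H.arm_arc hC hpC hqC hr

theorem mla_inj (H : HubbardTree X) {g : X → X} {x : X} {C D E : Set X} (hg : Continuous g)
    (hl : ∃ U ∈ 𝓝 x, InjOn g U) (h1 : MapsLocalArm g x C E) (h2 : MapsLocalArm g x D E) :
    C = D := by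
  obtain ⟨U, hU, hi⟩ := hl
  obtain ⟨hC, hE, U1, hU1, hs1⟩ := h1
  obtain ⟨hD, -, U2, hU2, hs2⟩ := h2
  obtain ⟨V, hV, hVU, hVa⟩ := H.local_arc x hU
  obtain ⟨p, hpC, hpV, hp1⟩ := H.near_arm hC (Filter.inter_mem hV hU1)
  obtain ⟨q, hqD, hqV, hq2⟩ := H.near_arm hD (Filter.inter_mem hV hU2)
  by_contra hne
  have e1 := H.arc_image hg (hi.mono (hVa p hpV))
  have e2 := H.arc_image hg (hi.mono (hVa q hqV))
  have := H.concat (p := g p) (r := g x) (q := g q) (by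
    intro s hs hs'
    rw [arc_symm, ← e1] at hs
    rw [← e2] at hs'
    obtain ⟨a, ha, rfl⟩ := hs
    obtain ⟨b, hb, hab⟩ := hs'
    have := hi (hVa q hqV hb) (hVa p hpV ha) hab
    subst this
    by_cases hbx : b = x
    · rw [hbx]
    · exact absurd (arm_unique hC hD (H.arc_mem_arm hC hpC ha hbx) (H.arc_mem_arm hD hqD hb hbx))
        hne)
  refine H.arm_arc hE (hs1 ⟨p, ⟨hpC, hp1⟩, rfl⟩) (hs2 ⟨q, ⟨hqD, hq2⟩, rfl⟩) ?_
  rw [this]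
  left; exact H.right_mem _ _

theorem loc_inj {x : X} (hx : x ≠ H.c0) : ∃ U ∈ 𝓝 x, InjOn H.f U := by
  obtain ⟨U, hUo, hxU, he⟩ := H.local_homeo x hx
  exact ⟨U, hUo.mem_nhds hxU, injOn_iff_injective.2 he.injective⟩

theorem loc_inj_iter {x : X} (hx : ∀ k, H.f^[k] x ≠ H.c0) (n : ℕ) :
    ∃ U ∈ 𝓝 x, InjOn (H.f^[n]) U := by
  induction n with
  | zero => exact ⟨univ, Filter.univ_mem, fun a _ b _ h => h⟩
  | succ n ih =>
    obtain ⟨U, hU, hi⟩ := ih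
    obtain ⟨V, hV, hi'⟩ := H.loc_inj (hx n)
    refine ⟨U ∩ H.f^[n] ⁻¹' V, Filter.inter_mem hU
      ((H.cont.iterate n).continuousAt.preimage_mem_nhds hV), ?_⟩
    intro a ha b hb hab
    rw [Function.iterate_succ_apply', Function.iterate_succ_apply'] at hab
    exact hi ha.1 hb.1 (hi' ha.2 hb.2 hab)

/-- pushing an arc starting at `w` forward. -/
theorem push {w y : X} {L L' : Set X} (hy : y ∈ L)
    (hc : ∀ p ∈ H.arc w y, p ≠ y → p ≠ H.c0) (hL : MapsLocalArm H.f w L L') :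
    H.f '' H.arc w y = H.arc (H.f w) (H.f y) ∧ H.f y ∈ L' := by
  have hi : InjOn H.f (H.arc w y) := H.arc_inj H.cont fun p hp hpy => H.loc_inj (hc p hp hpy)
  refine ⟨H.arc_image H.cont hi, ?_⟩
  obtain ⟨hLw, hL', U, hU, hs⟩ := hL
  have hyw : y ≠ w := fun h => not_mem_arm hLw (h ▸ hy)
  obtain ⟨p, hp, hpw, hpU⟩ := H.near_on_arc hyw hU
  refine conn_arm hL' (hs ⟨p, ⟨H.arc_mem_arm hLw hy hp hpw, hpU⟩, rfl⟩)
    ((H.arc_conn p y).image H.f H.cont.continuousOn) ⟨p, H.left_mem _ _, rfl⟩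
    ⟨y, H.right_mem _ _, rfl⟩ ?_
  rintro ⟨r, hr, he⟩
  have := hi (H.sub_right hp hr) (H.left_mem _ _) he
  subst this
  exact H.sub_avoid hp hpw hr

end HubbardTree

open Set Topology HubbardTree

/-- Corollary 3.4, "Two Kinds of Periodic Orbits".
The first return map of the characteristic point of a periodic orbit of branch
points either permutes all local arms transitively in a single cycle, or fixes the
local arm pointing to the critical point and permutes all other local arms
transitively in a single cycle. -/
theorem two_kinds_of_periodic_orbits
    {X : Type*} [TopologicalSpace X] (H : HubbardTree X) (z : X) (n : ℕ)
    (hchar : H.IsCharacteristic z) (hper : ExactPeriod H.f z n)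
    (hbranch : ∀ k : ℕ, IsBranchPt (H.f^[k] z)) :
    ArmsTransitive H.f n z ∨
      (MapsLocalArm (H.f^[n]) z (armTo z H.c0) (armTo z H.c0) ∧
        H.OtherArmsTransitive n z) := by
  obtain ⟨Cv, Cz, hCv, hCz, hne, hc1, hc0, horb⟩ := hchar
  obtain ⟨hn, hz, hmin⟩ := hper
  have hw1 : ∀ k, H.f^[k] z ≠ H.c1 := by
    intro k h
    by_cases hk : H.f^[k] z = z
    · rw [hk] at h
      exact not_mem_arm hCv (h ▸ hc1)
    · have := horb k hk
      rw [h] at this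
      exact hne (arm_unique hCv hCz hc1 this)
  have hw0 : ∀ k, H.f^[k] z ≠ H.c0 := by
    intro k h
    apply hw1 (k + 1)
    rw [Function.iterate_succ_apply', h]
    rfl
  have hex : ∀ (x : X) (C : Set X), ∃ D, C ∈ arms x → x ≠ H.c0 → MapsLocalArm H.f x C D := by
    intro x C
    by_cases h : C ∈ arms x ∧ x ≠ H.c0
    · obtain ⟨D, hD⟩ := mla_exists H H.cont (H.loc_inj h.2) h.1
      exact ⟨D, fun _ _ => hD⟩
    · exact ⟨∅, fun h1 h2 => absurd ⟨h1, h2⟩ h⟩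
  choose St hSt using hex
  set L : Set X → ℕ → Set X := fun C k => Nat.rec C (fun k D => St (H.f^[k] z) D) k with hLdef
  have hL0 : ∀ C, L C 0 = C := fun C => rfl
  have hLsucc : ∀ C k, L C (k + 1) = St (H.f^[k] z) (L C k) := fun C k => rfl
  have hL : ∀ C ∈ arms z, ∀ k, MapsLocalArm (H.f^[k]) z C (L C k) := by
    intro C hC k
    induction k with
    | zero =>
      refine ⟨hC, hC, univ, Filter.univ_mem, ?_⟩
      rintro _ ⟨p, hp, rfl⟩
      exact hp.1
    | succ k ih =>
      rw [Function.iterate_succ', hLsucc]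
      exact mla_comp (H.cont.iterate k).continuousAt ih (hSt _ _ ih.2.1 (hw0 k))
  have hLa : ∀ C ∈ arms z, ∀ k, L C k ∈ arms (H.f^[k] z) := fun C hC k => (hL C hC k).2.1
  have hLs : ∀ C ∈ arms z, ∀ k, MapsLocalArm H.f (H.f^[k] z) (L C k) (L C (k + 1)) := by
    intro C hC k
    exact hSt _ _ (hLa C hC k) (hw0 k)
  have hper : ∀ k m, H.f^[n * k + m] z = H.f^[m] z := by
    intro k m
    rw [add_comm, Function.iterate_add_apply, Function.iterate_mul]
    congr 1
    exact Function.iterate_fixed hz k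
  have hadd : ∀ C k m, L C (n * k + m) = L (L C (n * k)) m := by
    intro C k m
    induction m with
    | zero => rfl
    | succ m ih => rw [← add_assoc, hLsucc, hLsucc, ih, hper]
  set F : Set X → Set X := fun C => L C n with hF
  have hmul : ∀ C k, L C (n * k) = F^[k] C := by
    intro C k
    induction k with
    | zero => rfl
    | succ k ih => rw [mul_add, mul_one, hadd, ih, Function.iterate_succ_apply']
  have hFa : ∀ C ∈ arms z, F C ∈ arms z := by
    intro C hC
    have := hLa C hC n
    rwa [hz] at this
  have hFk : ∀ C ∈ arms z, ∀ k, F^[k] C ∈ arms z := by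
    intro C hC k
    induction k with
    | zero => exact hC
    | succ k ih => rw [Function.iterate_succ_apply']; exact hFa _ ih
  have hFm : ∀ C ∈ arms z, ∀ j, MapsLocalArm (H.f^[n * j]) z C (F^[j] C) := by
    intro C hC j
    rw [← hmul]
    exact hL C hC _
  have hFinj : ∀ C ∈ arms z, ∀ D ∈ arms z, F C = F D → C = D := by
    intro C hC D hD h
    have h1 := hL C hC n
    have h2 := hL D hD n
    change MapsLocalArm _ _ _ (F C) at h1
    rw [h] at h1
    exact mla_inj H (H.cont.iterate n) (H.loc_inj_iter hw0 n) h1 h2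
  have hB : ∀ C ∈ arms z, ∀ i ≤ n, (∃ j < i, H.c0 ∈ L C j) →
      H.c1 ∈ L C i ∨ ∃ k, H.f^[k] z ∈ L C i := by
    intro C hC i
    induction i with
    | zero => rintro _ ⟨j, hj, _⟩; exact absurd hj (by omega)
    | succ i ih =>
      rintro hi ⟨j, hj, hcj⟩
      by_cases hci : H.c0 ∈ L C i
      · left
        exact (H.push hci (fun p _ h => h) (hLs C hC i)).2
      · right
        have hji : j < i := by
          refine lt_of_le_of_ne (by omega) ?_
          rintro rfl; exact hci hcj
        have hpt : ∃ k, H.f^[k] z ∈ L C i := by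
          rcases ih (by omega) ⟨j, hji, hcj⟩ with h | h
          · refine ⟨0, ?_⟩
            have hwi : H.f^[i] z ≠ z := hmin i (by omega) (by omega)
            have hzm : z ∈ H.arc (H.f^[i] z) H.c1 := by
              by_contra hcon
              exact hne (arm_unique hCv hCz hc1 (conn_arm hCz (horb i hwi) (H.arc_conn _ _)
                (H.left_mem _ _) (H.right_mem _ _) hcon))
            exact H.arc_mem_arm (hLa C hC i) h hzm hwi.symm
          · exact h
        obtain ⟨k, hk⟩ := hpt
        refine ⟨k + 1, ?_⟩
        rw [Function.iterate_succ_apply']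
        refine (H.push hk ?_ (hLs C hC i)).2
        rintro p hp - rfl
        exact hci (H.arc_mem_arm (hLa C hC i) hk hp (hw0 i).symm)
  have hB' : ∀ C ∈ arms z, (∃ j < n, H.c0 ∈ L C j) → F C = Cv ∨ F C = Cz := by
    intro C hC hj
    rcases hB C hC n le_rfl hj with h | ⟨k, hk⟩
    · left; exact arm_unique (hFa C hC) hCv h hc1
    · right
      refine arm_unique (hFa C hC) hCz hk (horb k ?_)
      intro he
      rw [he] at hk
      exact not_mem_arm (hFa C hC) hk
  have hesc : ∀ C ∈ arms z, ∃ k, F^[k] C = Cv ∨ F^[k] C = Cz := by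
    intro C hC
    by_contra! hcon
    have hno : ∀ j, H.c0 ∉ L C j := by
      intro j hj
      rw [← Nat.div_add_mod j n, hadd, hmul] at hj
      have h1 := hB' _ (hFk C hC (j / n)) ⟨_, Nat.mod_lt _ (by omega), hj⟩
      have h2 := hcon (j / n + 1)
      rw [Function.iterate_succ_apply'] at h2
      rcases h1 with h | h
      · exact h2.1 h
      · exact h2.2 h
    obtain ⟨y, hy⟩ := arm_nonempty hC
    have hyz : y ≠ z := fun h => not_mem_arm hC (h ▸ hy)
    obtain ⟨e, he, hye⟩ := H.endpt_above z y hyz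
    have heC : e ∈ C := conn_arm hC hy (H.arc_conn y e) (H.left_mem _ _) (H.right_mem _ _)
      (H.sub_avoid hye hyz)
    have hez : z ≠ e := fun h => not_mem_arm hC (h ▸ heC)
    have hav : ∀ m, ∀ p ∈ H.arc (H.f^[m] z) (H.f^[m] e), H.f^[m] e ∈ L C m → p ≠ H.c0 := by
      rintro m p hp hm rfl
      exact hno m (H.arc_mem_arm (hLa C hC m) hm hp (hw0 m).symm)
    have hall : ∀ m, H.f^[m] '' H.arc z e = H.arc (H.f^[m] z) (H.f^[m] e) ∧
        H.f^[m] e ∈ L C m := by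
      intro m
      induction m with
      | zero => exact ⟨by simp, heC⟩
      | succ m ih =>
        have := H.push ih.2 (fun p hp _ => hav m p hp ih.2) (hLs C hC m)
        rw [Function.iterate_succ_apply', Function.iterate_succ_apply']
        refine ⟨?_, this.2⟩
        rw [Function.iterate_succ', image_comp, ih.1, this.1]
    obtain ⟨m, hm⟩ := H.expansive z e hez (Or.inl (hbranch 0)) (Or.inr (H.endpoints_on_orbit e he))
    rw [(hall m).1] at hm
    exact hav m _ hm (hall m).2 rfl
  have hsymm : ∀ C ∈ arms z, ∀ i, ∃ j, F^[j] (F^[i] C) = C := by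
    intro C hC i
    have hfin : Finite (arms z) := H.arms_finite z
    set Fs : arms z → arms z := fun C => ⟨F C.1, hFa C.1 C.2⟩ with hFs
    have hinj : Function.Injective Fs := by
      intro A B h
      exact Subtype.ext (hFinj _ A.2 _ B.2 (congrArg Subtype.val h))
    have hval : ∀ k (A : arms z), (Fs^[k] A).1 = F^[k] A.1 := by
      intro k A
      induction k with
      | zero => rfl
      | succ k ih => rw [Function.iterate_succ_apply', Function.iterate_succ_apply', ← ih]
    obtain ⟨k, hk, hkp⟩ := hinj.mem_periodicPts ⟨C, hC⟩
    have hk' : F^[k] C = C := by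
      rw [← hval k ⟨C, hC⟩, hkp.eq]
    refine ⟨k * i - i, ?_⟩
    rw [← Function.iterate_add_apply, Nat.sub_add_cancel (Nat.le_mul_of_pos_left i hk),
      Function.iterate_mul]
    exact Function.iterate_fixed hk' i
  have hconn : ∀ C ∈ arms z, ∀ C' ∈ arms z, (∃ i, F^[i] C = Cv) → (∃ i, F^[i] C' = Cv) →
      ∃ j : ℕ, MapsLocalArm (H.f^[n * j]) z C C' := by
    rintro C hC C' hC' ⟨i, hi⟩ ⟨i', hi'⟩
    obtain ⟨j, hj⟩ := hsymm C' hC' i'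
    refine ⟨j + i, ?_⟩
    have := hFm C hC (j + i)
    rwa [Function.iterate_add_apply, hi, ← hi', hj] at this
  have hCz0 : armTo z H.c0 = Cz := (arm_eq hCz hc0).symm
  rcases hB' Cz hCz ⟨0, by omega, hc0⟩ with h | h
  · left
    have hr : ∀ C ∈ arms z, ∃ i, F^[i] C = Cv := by
      intro C hC
      obtain ⟨k, hk | hk⟩ := hesc C hC
      · exact ⟨k, hk⟩
      · exact ⟨k + 1, by rw [Function.iterate_succ_apply', hk, h]⟩
    intro C hC C' hC'
    exact hconn C hC C' hC' (hr C hC) (hr C' hC')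
  · right
    have hr : ∀ C ∈ arms z, C ≠ Cz → ∃ i, F^[i] C = Cv := by
      intro C hC hCne
      obtain ⟨k, hk | hk⟩ := hesc C hC
      · exact ⟨k, hk⟩
      · exfalso
        obtain ⟨j, hj⟩ := hsymm C hC k
        rw [hk, Function.iterate_fixed h j] at hj
        exact hCne hj.symm
    refine ⟨?_, ?_⟩
    · rw [hCz0]
      have := hFm Cz hCz 1
      rwa [mul_one, Function.iterate_one, h] at this
    · intro C hC hCne C' hC' hCne'
      rw [hCz0] at hCne hCne'
      exact hconn C hC C' hC' (hr C hC hCne) (hr C' hC' hCne')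

end HubbardTrees
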